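/- Let M₀ = [[A,B],[B*,D]] be a top-dominant block operator matrix satisfying conditions (i)–(iii), with self-adjoint closure M, d = max Spec(D), λ_e = inf(Spec_ess(M) ∩ (d,∞)), and Schur complement S(μ). Let μ ∈ (d, λ_e) and 0 < ε < μ − d. If [−ε, 0] ∩ Spec(S(μ)) ≠ ∅, then [μ−ε, μ] ∩ Spec(M) ≠ ∅. -/

import Mathlib

open Filter Topology
open scoped ComplexInnerProductSpace

/-- A (possibly unbounded, densely defined) linear operator from `E` to `F`,
encoded by its domain together with a total function that is linear on the domain. -/
structure PMap (E F : Type*) [NormedAddCommGroup E] [InnerProductSpace ℂ E]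
    [NormedAddCommGroup F] [InnerProductSpace ℂ F] : Type _ where
  dom : Submodule ℂ E
  toFun : E → F
  map_add' : ∀ x ∈ dom, ∀ y ∈ dom, toFun (x + y) = toFun x + toFun y
  map_smul' : ∀ (c : ℂ), ∀ x ∈ dom, toFun (c • x) = c • toFun x

namespace PMap

variable {E F : Type*} [NormedAddCommGroup E] [InnerProductSpace ℂ E]
  [NormedAddCommGroup F] [InnerProductSpace ℂ F]

/-- `T` is self-adjoint : it is densely defined and the adjoint relation
`⟪T x, y⟫ = ⟪x, z⟫` (for all `x` in the domain) holds iff `y` is in the domain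
and `z = T y`. -/
def IsSelfAdjoint (T : PMap E E) : Prop :=
  Dense (T.dom : Set E) ∧
    ∀ y z : E, (∀ x ∈ T.dom, ⟪T.toFun x, y⟫ = ⟪x, z⟫) ↔ y ∈ T.dom ∧ z = T.toFun y

/-- The resolvent set : points `z` where `T - z` has an everywhere defined bounded inverse. -/
def resolventSet (T : PMap E E) : Set ℂ :=
  {z | ∃ R : E →L[ℂ] E, (∀ x ∈ T.dom, R (T.toFun x - z • x) = x) ∧
      ∀ y : E, R y ∈ T.dom ∧ T.toFun (R y) - z • R y = y}

/-- The spectrum of `T`. -/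
def spec (T : PMap E E) : Set ℂ := {z | z ∉ T.resolventSet}

/-- The real points of the spectrum of `T`. -/
def specR (T : PMap E E) : Set ℝ := {t : ℝ | (t : ℂ) ∈ T.spec}

/-- The (real) essential spectrum of `T`, via singular Weyl sequences. -/
def specEssR (T : PMap E E) : Set ℝ :=
  {t : ℝ | ∃ f : ℕ → E, (∀ n, f n ∈ T.dom) ∧ (∀ n, ‖f n‖ = 1) ∧
      (∀ y : E, Tendsto (fun n => ⟪y, f n⟫) atTop (𝓝 0)) ∧
      Tendsto (fun n => ‖T.toFun (f n) - (t : ℂ) • f n‖) atTop (𝓝 0)}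

/-- The eigenspace `ker (T - t)`. -/
def eigSp (T : PMap E E) (t : ℝ) : Submodule ℂ E where
  carrier := {x | x ∈ T.dom ∧ T.toFun x = (t : ℂ) • x}
  add_mem' := by
    rintro a b ⟨ha1, ha2⟩ ⟨hb1, hb2⟩
    exact ⟨T.dom.add_mem ha1 hb1, by rw [T.map_add' a ha1 b hb1, ha2, hb2, smul_add]⟩
  zero_mem' := by
    refine ⟨T.dom.zero_mem, ?_⟩
    have h := T.map_smul' 0 0 T.dom.zero_mem
    simpa using h
  smul_mem' := by
    rintro c x ⟨hx1, hx2⟩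
    refine ⟨T.dom.smul_mem c hx1, ?_⟩
    rw [T.map_smul' c x hx1, hx2]
    exact smul_comm c ((t : ℂ)) x

/-- The distance from `u` to the set `L` in the graph norm of `T`. -/
noncomputable def gdist (T : PMap E E) (u : E) (L : Set E) : ℝ :=
  sInf {r | ∃ v ∈ L, r = Real.sqrt (‖u - v‖ ^ 2 + ‖T.toFun u - T.toFun v‖ ^ 2)}

end PMap

/-- The Schur form `s(μ)[x,y] = 𝔞[x,y] − μ⟨x,y⟩ − ⟨(D−μ)⁻¹ B*x, B*y⟩`, where `fa` is the
closed form of `A`, `Bs = B*`, and `RD μ = (D−μ)⁻¹` is the resolvent of `D`. -/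
noncomputable def schurForm {H1 H2 : Type*} [NormedAddCommGroup H1] [InnerProductSpace ℂ H1]
    [NormedAddCommGroup H2] [InnerProductSpace ℂ H2]
    (fa : H1 → H1 → ℂ) (Bs : PMap H1 H2) (RD : ℂ → (H2 →L[ℂ] H2)) (μ : ℂ) (x y : H1) : ℂ :=
  fa x y - μ * ⟪x, y⟫ - ⟪RD μ (Bs.toFun x), Bs.toFun y⟫

namespace PMap

variable {E : Type*} [NormedAddCommGroup E] [InnerProductSpace ℂ E]

theorem symm_of_sa {T : PMap E E} (hT : T.IsSelfAdjoint) {x y : E} (hx : x ∈ T.dom)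
    (hy : y ∈ T.dom) : ⟪T.toFun x, y⟫ = ⟪x, T.toFun y⟫ :=
  (hT.2 y (T.toFun y)).2 ⟨hy, rfl⟩ x hx

theorem map_sub_of_mem (T : PMap E E) {x y : E} (hx : x ∈ T.dom) (hy : y ∈ T.dom) :
    T.toFun (x - y) = T.toFun x - T.toFun y := by
  have h1 := T.map_smul' (-1) y hy
  have h2 := T.map_add' x hx ((-1 : ℂ) • y) (T.dom.smul_mem _ hy)
  rw [h1] at h2
  simpa [sub_eq_add_neg] using h2

/-- A self-adjoint operator for which `T - t` is bounded below has `t` in its resolvent set. -/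
theorem mem_resolvent_of_bound [CompleteSpace E] {T : PMap E E} (hT : T.IsSelfAdjoint) (t C : ℝ)
    (h : ∀ x ∈ T.dom, ‖x‖ ≤ C * ‖T.toFun x - (t : ℂ) • x‖) :
    (t : ℂ) ∈ T.resolventSet := by
  -- the operator `T - t` as a linear map on the domain
  let L : T.dom →ₗ[ℂ] E :=
    { toFun := fun x => T.toFun x - (t : ℂ) • (x : E)
      map_add' := by
        intro x y
        simp only [Submodule.coe_add, T.map_add' x x.2 y y.2, smul_add]
        abel
      map_smul' := by
        intro c x
        simp only [Submodule.coe_smul, T.map_smul' c x x.2, RingHom.id_apply, smul_sub]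
        rw [smul_comm] }
  have hL : ∀ x : T.dom, L x = T.toFun x - (t : ℂ) • (x : E) := fun x => rfl
  have hbd : ∀ x : T.dom, ‖(x : E)‖ ≤ C * ‖L x‖ := fun x => h x x.2
  have hinj : Function.Injective L := by
    rw [← LinearMap.ker_eq_bot, LinearMap.ker_eq_bot']
    intro x hx
    have := hbd x
    rw [hx] at this
    simp only [norm_zero, mul_zero, norm_le_zero_iff] at this
    exact Subtype.ext this
  -- closed range
  have hcl : IsClosed (LinearMap.range L : Set E) := by
    rw [← isSeqClosed_iff_isClosed]
    intro u v hu huv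
    choose w hw using hu
    have hcw : CauchySeq (fun n => (w n : E)) := by
      have hcu := huv.cauchySeq
      rw [Metric.cauchySeq_iff'] at hcu ⊢
      intro e he
      obtain ⟨N, hN⟩ := hcu (e / (|C| + 1)) (by positivity)
      refine ⟨N, fun n hn => ?_⟩
      have h1 := hbd (w n - w N)
      rw [map_sub, hw, hw] at h1
      have h2 := hN n hn
      rw [dist_eq_norm] at h2 ⊢
      have h3 : ‖(w n : E) - w N‖ ≤ |C| * ‖u n - u N‖ := by
        refine le_trans (by simpa using h1) ?_
        gcongr
        exact le_abs_self C
      rw [lt_div_iff₀ (by positivity)] at h2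
      nlinarith [norm_nonneg (u n - u N)]
    obtain ⟨x, hx⟩ := cauchySeq_tendsto_of_complete hcw
    have hTx : x ∈ T.dom ∧ v + (t : ℂ) • x = T.toFun x := by
      refine (hT.2 x _).1 fun a ha => ?_
      have e1 : Tendsto (fun n => ⟪T.toFun a, (w n : E)⟫) atTop (𝓝 ⟪T.toFun a, x⟫) :=
        tendsto_const_nhds.inner hx
      have e2 : Tendsto (fun n => ⟪a, u n + (t : ℂ) • (w n : E)⟫) atTop
          (𝓝 ⟪a, v + (t : ℂ) • x⟫) :=
        tendsto_const_nhds.inner (huv.add (hx.const_smul _))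
      refine tendsto_nhds_unique e1 (e2.congr fun n => ?_)
      rw [symm_of_sa hT ha (w n).2, ← hw n, hL]
      simp
    refine ⟨⟨x, hTx.1⟩, ?_⟩
    rw [hL]
    exact sub_eq_iff_eq_add.2 hTx.2.symm
  have horth : (LinearMap.range L)ᗮ = ⊥ := by
    rw [Submodule.eq_bot_iff]
    intro z hz
    rw [Submodule.mem_orthogonal] at hz
    have hTz : z ∈ T.dom ∧ (t : ℂ) • z = T.toFun z := by
      refine (hT.2 z _).1 fun a ha => ?_
      have := hz (L ⟨a, ha⟩) ⟨_, rfl⟩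
      rw [hL] at this
      simp only [inner_sub_left, inner_smul_left, Complex.conj_ofReal] at this
      rw [inner_smul_right]
      exact sub_eq_zero.1 this
    have := h z hTz.1
    rw [← hTz.2] at this
    simpa using this
  have htop : LinearMap.range L = ⊤ := by
    have : CompleteSpace (LinearMap.range L) := hcl.completeSpace_coe
    exact (Submodule.orthogonal_eq_bot_iff).1 horth
  let e := LinearEquiv.ofBijective L ⟨hinj, LinearMap.range_eq_top.1 htop⟩
  have he : ∀ y, L (e.symm y) = y := fun y => e.apply_symm_apply y
  refine ⟨LinearMap.mkContinuous (T.dom.subtype ∘ₗ e.symm.toLinearMap) C ?_, ?_, ?_⟩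
  · intro y
    have := hbd (e.symm y)
    rw [he] at this
    exact this
  · intro x hx
    have : e.symm (L ⟨x, hx⟩) = ⟨x, hx⟩ := e.symm_apply_apply _
    exact congrArg Subtype.val this
  · intro y
    exact ⟨(e.symm y).2, he y⟩

/-- Resolvent identity. -/
theorem resolvent_identity {T : PMap E E} {z w : ℂ} {R Q : E →L[ℂ] E}
    (hR : ∀ x ∈ T.dom, R (T.toFun x - z • x) = x)
    (hQ : ∀ y : E, Q y ∈ T.dom ∧ T.toFun (Q y) - w • Q y = y) :
    R - Q = (z - w) • (R * Q) := by
  ext u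
  have h1 := hR (Q u) (hQ u).1
  have h2 : T.toFun (Q u) - z • Q u = u - (z - w) • Q u := by
    have := (hQ u).2
    rw [sub_eq_iff_eq_add] at this
    rw [this]
    module
  rw [h2, map_sub, map_smul] at h1
  simp only [ContinuousLinearMap.sub_apply, ContinuousLinearMap.smul_apply,
    ContinuousLinearMap.mul_apply]
  nth_rewrite 1 [← h1]
  abel

/-- If a self-adjoint operator has no spectrum in `[m - e, m]`, then its resolvent at `m`
is bounded below by `-c` with `c < 1 / e`. -/
theorem resolvent_lower [CompleteSpace E] {T : PMap E E} (hT : T.IsSelfAdjoint) {m e : ℝ}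
    (he : 0 < e) (h : ∀ s ∈ Set.Icc (m - e) m, (s : ℂ) ∈ T.resolventSet) :
    ∃ R : E →L[ℂ] E, (∀ x ∈ T.dom, R (T.toFun x - (m : ℂ) • x) = x) ∧
      ∃ c : ℝ, c * e < 1 ∧ ∀ u, -c * ‖u‖ ^ 2 ≤ (⟪R u, u⟫ : ℂ).re := by
  obtain ⟨R, hR1, hR2⟩ := h m ⟨by linarith, le_rfl⟩
  refine ⟨R, hR1, ?_⟩
  have hsa : _root_.IsSelfAdjoint R := by
    rw [ContinuousLinearMap.isSelfAdjoint_iff_isSymmetric]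
    intro u v
    have h1 := (hR2 u).2
    have h2 := (hR2 v).2
    have h3 := symm_of_sa hT (hR2 u).1 (hR2 v).1
    change ⟪R u, v⟫ = ⟪u, R v⟫
    calc ⟪R u, v⟫ = ⟪R u, T.toFun (R v) - (m : ℂ) • R v⟫ := by rw [h2]
      _ = ⟪T.toFun (R u) - (m : ℂ) • R u, R v⟫ := by
        rw [inner_sub_right, inner_sub_left, h3, inner_smul_left, inner_smul_right,
          Complex.conj_ofReal]
      _ = ⟪u, R v⟫ := by rw [h1]
  have hunit : ∀ r : ℝ, r ≤ -(1 / e) → r ∉ spectrum ℝ R := by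
    intro r hr
    have hr0 : r < 0 := lt_of_le_of_lt hr (by simpa using he)
    have hs1 : -e ≤ r⁻¹ := by
      rw [neg_le, ← inv_neg]
      refine inv_le_of_inv_le₀ he ?_
      rw [← one_div]
      linarith
    have hs0 : r⁻¹ < 0 := inv_lt_zero.2 hr0
    obtain ⟨Q, hQ1, hQ2⟩ := h (m + r⁻¹) ⟨by linarith, by linarith⟩
    have i1 := resolvent_identity hQ1 hR2
    have i2 := resolvent_identity hR1 hQ2
    have hrc : (r : ℂ) ≠ 0 := by exact_mod_cast hr0.ne
    have hc1 : ((m + r⁻¹ : ℝ) : ℂ) - (m : ℂ) = (r : ℂ)⁻¹ := by push_cast; ring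
    have hc2 : (m : ℂ) - ((m + r⁻¹ : ℝ) : ℂ) = -(r : ℂ)⁻¹ := by push_cast; ring
    rw [hc1] at i1
    rw [hc2] at i2
    have k1 : Q * R = (r : ℂ) • (Q - R) := by rw [i1, smul_inv_smul₀ hrc]
    have k2 : R * Q = (r : ℂ) • (Q - R) := by
      rw [← neg_sub R Q, i2, neg_smul, neg_neg, smul_inv_smul₀ hrc]
    have ha : algebraMap ℝ (E →L[ℂ] E) r = (r : ℂ) • 1 := by
      ext u
      simp [Algebra.algebraMap_eq_smul_one]
    rw [spectrum.notMem_iff, ha]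
    have hcc : (r : ℂ) * (r : ℂ)⁻¹ = 1 := mul_inv_cancel₀ hrc
    refine ⟨⟨_, (r : ℂ)⁻¹ • (1 + (r : ℂ)⁻¹ • Q), ?_, ?_⟩, rfl⟩
    · simp only [sub_mul, mul_add, smul_mul_assoc, mul_smul_comm, one_mul, mul_one, smul_add,
        k2, smul_smul, smul_sub]
      match_scalars <;> field_simp <;> ring
    · simp only [mul_sub, add_mul, smul_mul_assoc, mul_smul_comm, one_mul, mul_one, smul_add,
        k1, smul_smul, smul_sub]
      match_scalars <;> field_simp <;> ring
  have hop : ∃ η > 0, ∀ r : ℝ, r ≤ -(1 / e) + η → r ∉ spectrum ℝ R := by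
    have hcl : IsOpen (spectrum ℝ R)ᶜ := (spectrum.isClosed R).isOpen_compl
    obtain ⟨η, hη, hb⟩ := Metric.isOpen_iff.1 hcl (-(1 / e)) (hunit _ le_rfl)
    refine ⟨η / 2, by positivity, fun r hr => ?_⟩
    rcases le_or_gt r (-(1 / e)) with h1 | h1
    · exact hunit r h1
    · apply hb
      rw [Metric.mem_ball, Real.dist_eq, abs_lt]
      constructor <;> linarith
  obtain ⟨η, hη, hspec⟩ := hop
  refine ⟨1 / e - η, ?_, fun u => ?_⟩
  · rw [sub_mul, one_div_mul_cancel he.ne']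
    nlinarith
  have hle : algebraMap ℝ (E →L[ℂ] E) (-(1 / e - η)) ≤ R := by
    refine algebraMap_le_of_le_spectrum (fun x hx => ?_) hsa
    by_contra! hlt
    exact hspec x (by linarith) hx
  have hpos := (ContinuousLinearMap.le_def _ _).1 hle
  have h0 := hpos.re_inner_nonneg_left u
  have ha : (algebraMap ℝ (E →L[ℂ] E) (-(1 / e - η))) u = ((-(1 / e - η) : ℝ) : ℂ) • u := by
    simp only [Algebra.algebraMap_eq_smul_one, Complex.coe_smul]
    rfl
  have hs : (R - algebraMap ℝ (E →L[ℂ] E) (-(1 / e - η))) u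
      = R u - ((-(1 / e - η) : ℝ) : ℂ) • u := by
    rw [← ha]
    rfl
  rw [hs, inner_sub_left, inner_smul_left, Complex.conj_ofReal, inner_self_eq_norm_sq_to_K] at h0
  have h1 : (((-(1 / e - η) : ℝ) : ℂ) * ((‖u‖ : ℂ)) ^ 2).re = -(1 / e - η) * ‖u‖ ^ 2 := by
    norm_cast
  change 0 ≤ (⟪R u, u⟫ - ((-(1 / e - η) : ℝ) : ℂ) * ((‖u‖ : ℂ)) ^ 2 : ℂ).re at h0
  rw [Complex.sub_re, h1] at h0
  linarith

end PMap

/-- Lemma 4.5 of the paper.  For a top-dominant block operator matrix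
with self-adjoint closure `M`, `d = max Spec D`, `λ_e = inf (Spec_ess M ∩ (d,∞))` and
Schur complement `S(μ)`: if `μ ∈ (d, λ_e)`, `0 < ε < μ − d` and
`[−ε, 0] ∩ Spec (S μ) ≠ ∅`, then `[μ − ε, μ] ∩ Spec M ≠ ∅`. -/
theorem statement11
    {H1 : Type*} [NormedAddCommGroup H1] [InnerProductSpace ℂ H1] [CompleteSpace H1]
    {H2 : Type*} [NormedAddCommGroup H2] [InnerProductSpace ℂ H2] [CompleteSpace H2]
    -- (i) `A` and `D` are self-adjoint on `H1` and `H2` respectively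
    (A : PMap H1 H1) (hA : A.IsSelfAdjoint)
    (D : PMap H2 H2) (hD : D.IsSelfAdjoint)
    -- (ii) `A` bounded below, `D` bounded above with `d = max Spec D`,
    -- `B` closed and densely defined from `H2` to `H1`
    (hAbelow : ∃ c : ℝ, ∀ x ∈ A.dom, c * ‖x‖ ^ 2 ≤ (⟪A.toFun x, x⟫ : ℂ).re)
    (d : ℝ) (hd : IsGreatest D.specR d)
    (hDabove : ∀ y ∈ D.dom, (⟪D.toFun y, y⟫ : ℂ).re ≤ d * ‖y‖ ^ 2)
    (B : PMap H2 H1)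
    (hBclosed : IsClosed {p : H2 × H1 | p.1 ∈ B.dom ∧ p.2 = B.toFun p.1})
    (hBdense : Dense (B.dom : Set H2))
    -- `Bs` is the adjoint `B*` of `B`
    (Bs : PMap H1 H2)
    (hBs : (∀ y : H1, y ∈ Bs.dom ↔ ∃ z : H2, ∀ x ∈ B.dom, ⟪B.toFun x, y⟫ = ⟪x, z⟫) ∧
      ∀ x ∈ B.dom, ∀ y ∈ Bs.dom, ⟪B.toFun x, y⟫ = ⟪x, Bs.toFun y⟫)
    -- `Fa = Dom(|A|^{1/2}) = Dom(𝔞)`, the domain of the closed form `fa = 𝔞` of `A`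
    (Fa : Submodule ℂ H1) (fa : H1 → H1 → ℂ)
    (hAdomFa : (A.dom : Set H1) ⊆ Fa)
    (hfaHerm : ∀ x ∈ Fa, ∀ y ∈ Fa, fa x y = starRingEnd ℂ (fa y x))
    (hfaA : ∀ x ∈ A.dom, ∀ y ∈ Fa, fa x y = ⟪A.toFun x, y⟫)
    -- (iii) `Dom(|A|^{1/2}) ⊆ Dom(B*)`, `Dom(B) ⊆ Dom(D)`, and `Dom(B)` is a core for `D`
    (hFaBs : (Fa : Set H1) ⊆ (Bs.dom : Set H1))
    (hBD : B.dom ≤ D.dom)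
    (hBcore : ∀ y ∈ D.dom, ∀ δ : ℝ, 0 < δ →
      ∃ z ∈ B.dom, ‖z - y‖ < δ ∧ ‖D.toFun z - D.toFun y‖ < δ)
    -- `ν < min Spec A`, with `RA = (A − ν)⁻¹` and `G = cl((A − ν)⁻¹ B)` bounded,
    -- and `RD z = (D − z)⁻¹` for `Re z > d`
    (ν : ℝ) (hν : ∃ c : ℝ, ν < c ∧ ∀ x ∈ A.dom, c * ‖x‖ ^ 2 ≤ (⟪A.toFun x, x⟫ : ℂ).re)
    (RA : H1 →L[ℂ] H1)
    (hRA : (∀ x ∈ A.dom, RA (A.toFun x - (ν : ℂ) • x) = x) ∧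
      ∀ y : H1, RA y ∈ A.dom ∧ A.toFun (RA y) - (ν : ℂ) • RA y = y)
    (G : H2 →L[ℂ] H1) (hG : ∀ y ∈ B.dom, G y = RA (B.toFun y))
    (RD : ℂ → (H2 →L[ℂ] H2))
    (hRD : ∀ z : ℂ, d < z.re →
      (∀ y ∈ D.dom, RD z (D.toFun y - z • y) = y) ∧
      ∀ w : H2, RD z w ∈ D.dom ∧ D.toFun (RD z w) - z • RD z w = w)
    -- `M` is the self-adjoint closure of `M₀`
    (M : PMap (WithLp 2 (H1 × H2)) (WithLp 2 (H1 × H2))) (hM : M.IsSelfAdjoint)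
    (hMdom : ∀ (x : H1) (y : H2),
      (WithLp.equiv 2 (H1 × H2)).symm (x, y) ∈ M.dom ↔ y ∈ D.dom ∧ x + G y ∈ A.dom)
    (hMact : ∀ (x : H1) (y : H2),
      (WithLp.equiv 2 (H1 × H2)).symm (x, y) ∈ M.dom → x ∈ Bs.dom →
      M.toFun ((WithLp.equiv 2 (H1 × H2)).symm (x, y)) =
        (WithLp.equiv 2 (H1 × H2)).symm
          (A.toFun (x + G y) - (ν : ℂ) • G y, Bs.toFun x + D.toFun y))
    -- the Schur complement `S μ` for real `μ > d`
    (S : ℝ → PMap H1 H1)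
    (hSsa : ∀ μ : ℝ, d < μ → (S μ).IsSelfAdjoint)
    (hSdom : ∀ μ : ℝ, d < μ → ∀ x : H1,
      x ∈ (S μ).dom ↔ x ∈ Fa ∧ x - G (RD (μ : ℂ) (Bs.toFun x)) ∈ A.dom)
    (hSact : ∀ μ : ℝ, d < μ → ∀ x ∈ (S μ).dom,
      (S μ).toFun x = A.toFun (x - G (RD (μ : ℂ) (Bs.toFun x)))
        - (ν : ℂ) • (x - G (RD (μ : ℂ) (Bs.toFun x))) + ((ν : ℂ) - (μ : ℂ)) • x)
    -- `lamE`: the interval `(d, lamE)` lies below the essential spectrum of `M`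
    -- (`lamE = inf (Spec_ess M ∩ (d, ∞))`)
    (lamE : ℝ) (hlamE : ∀ t ∈ M.specEssR, d < t → lamE ≤ t)
    -- it is assumed that `κ(μ') < ∞` for some `μ' > d` (variational characterization of
    -- the total multiplicity of the negative spectrum of `S(μ')`)
    (hκfin : ∃ μ' : ℝ, d < μ' ∧ ∃ k : ℕ, ∀ V : Submodule ℂ H1, (V : Set H1) ⊆ Fa →
      (∀ u ∈ V, u ≠ 0 → (schurForm fa Bs RD (μ' : ℂ) u u).re < 0) →
      Module.finrank ℂ V ≤ k)
    (μ ε : ℝ) (hμ : μ ∈ Set.Ioo d lamE) (hε : 0 < ε) (hεμ : ε < μ - d)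
    (hSspec : (Set.Icc (-ε) 0 ∩ (S μ).specR).Nonempty) :
    (Set.Icc (μ - ε) μ ∩ M.specR).Nonempty := by
  by_contra hne
  have hres : ∀ s ∈ Set.Icc (μ - ε) μ, (s : ℂ) ∈ M.resolventSet := by
    intro s hs
    by_contra hcon
    exact hne ⟨s, hs, hcon⟩
  obtain ⟨R, hR, c, hc, hRc⟩ := PMap.resolvent_lower hM hε hres
  obtain ⟨t, ht, htS⟩ := hSspec
  apply htS
  have hdμ : d < μ := hμ.1
  have hδ : 0 < 1 + t * c := by
    rcases le_or_gt c 0 with h0 | h0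
    · nlinarith [ht.1, ht.2]
    · nlinarith [ht.1, ht.2]
  refine PMap.mem_resolvent_of_bound (hSsa μ hdμ) t (‖R‖ / (1 + t * c)) fun x hx => ?_
  have hx' := (hSdom μ hdμ x).1 hx
  have hSx := hSact μ hdμ x hx
  set b := Bs.toFun x with hb
  set y := RD (μ : ℂ) b with hy
  obtain ⟨hyD, hyeq⟩ := (hRD (μ : ℂ) (by simpa using hdμ)).2 b
  rw [← hy] at hyD hyeq
  have hyD' : -y ∈ D.dom := D.dom.neg_mem hyD
  have hDneg : D.toFun (-y) = - D.toFun y := by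
    simpa using D.map_smul' (-1) y hyD
  have hGn : x + G (-y) = x - G y := by rw [map_neg, sub_eq_add_neg]
  have hmem : (WithLp.equiv 2 (H1 × H2)).symm (x, -y) ∈ M.dom :=
    (hMdom x (-y)).2 ⟨hyD', by rw [hGn]; exact hx'.2⟩
  have hact := hMact x (-y) hmem (hFaBs hx'.1)
  rw [hGn, hDneg, ← hb] at hact
  have hR1 := hR _ hmem
  have hMv : M.toFun ((WithLp.equiv 2 (H1 × H2)).symm (x, -y))
      - (μ : ℂ) • (WithLp.equiv 2 (H1 × H2)).symm (x, -y)
      = WithLp.toLp 2 ((S μ).toFun x, (0 : H2)) := by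
    rw [hact]
    change WithLp.toLp 2 _ - (μ : ℂ) • WithLp.toLp 2 _ = _
    rw [← WithLp.toLp_smul, ← WithLp.toLp_sub]
    congr 1
    refine Prod.ext ?_ ?_
    · simp only [Prod.fst_sub, Prod.smul_fst, hSx, map_neg]
      module
    · simp only [Prod.snd_sub, Prod.smul_snd]
      rw [← hyeq]
      module
  rw [hMv] at hR1
  -- test against the embedded vector
  set X : WithLp 2 (H1 × H2) := WithLp.toLp 2 (x, (0 : H2)) with hX
  set U : WithLp 2 (H1 × H2) := WithLp.toLp 2 ((S μ).toFun x - (t : ℂ) • x, (0 : H2)) with hU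
  have hUe : WithLp.toLp 2 ((S μ).toFun x, (0 : H2)) = U + (t : ℂ) • X := by
    rw [hU, hX, ← WithLp.toLp_smul, ← WithLp.toLp_add]
    congr 1
    refine Prod.ext ?_ ?_ <;> simp
  have hXn : ‖X‖ = ‖x‖ := by simp [hX]
  have hUn : ‖U‖ = ‖(S μ).toFun x - (t : ℂ) • x‖ := by simp [hU]
  rw [hUe, map_add, map_smul] at hR1
  have hin : (⟪R U, X⟫ : ℂ).re + t * (⟪R X, X⟫ : ℂ).re = ‖x‖ ^ 2 := by
    have h1 := congrArg (fun v => (⟪v, X⟫ : ℂ).re) hR1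
    simp only [inner_add_left, inner_smul_left, Complex.conj_ofReal, Complex.add_re,
      Complex.re_ofReal_mul] at h1
    rw [h1]
    have : (⟪(WithLp.equiv 2 (H1 × H2)).symm (x, -y), X⟫ : ℂ) = ⟪x, x⟫ := by
      simp [hX, WithLp.prod_inner_apply]
    rw [this, inner_self_eq_norm_sq_to_K]
    norm_cast
  have hup : (⟪R U, X⟫ : ℂ).re ≤ ‖R‖ * ‖U‖ * ‖X‖ := by
    refine (Complex.re_le_norm _).trans ((norm_inner_le_norm _ _).trans ?_)
    gcongr
    exact R.le_opNorm U
  have hlow := hRc X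
  rw [hXn] at hlow hup
  rw [hUn] at hup
  rw [div_mul_eq_mul_div, le_div_iff₀ hδ]
  have hmain : (1 + t * c) * ‖x‖ ^ 2 ≤ ‖R‖ * ‖(S μ).toFun x - (t : ℂ) • x‖ * ‖x‖ := by
    nlinarith [ht.2, mul_le_mul_of_nonpos_left hlow ht.2]
  rcases eq_or_lt_of_le (norm_nonneg x) with h0 | h0
  · rw [← h0]
    simp only [zero_mul]
    positivity
  · nlinarith
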